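/- Let J ∈ ℝ^{2N×2N} be an invertible skew-symmetric matrix, let H : ℝ → ℝ^{2N×2N} satisfy H(t)ᵀ = H(t) for all t, and let u ∈ ℝ^{2N}. Suppose X̃ : ℝ → ℝ^{2N×2N} is differentiable and satisfies J·X̃′(t) = (I − uuᵀJ)ᵀ H(t) (I − uuᵀJ)·X̃(t) for all t, together with X̃(0) = I + uuᵀJ. Then the function X(t) := (I − uuᵀJ)·X̃(t) is differentiable and satisfies J·X′(t) = H(t)·X(t) for all t with X(0) = I; equivalently, X̃(t) = (I + uuᵀJ)·X(t) where X solves the unperturbed Hamiltonian system with X(0) = I. -/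

import Mathlib

open Matrix

/-- The quadratic form of a skew-symmetric real matrix vanishes. -/
lemma dotProduct_mulVec_self_eq_zero_of_transpose_eq_neg {n : Type*} [Fintype n]
    {J : Matrix n n ℝ} (hJ : Jᵀ = -J) (u : n → ℝ) : u ⬝ᵥ (J *ᵥ u) = 0 := by
  have h : u ⬝ᵥ (J *ᵥ u) = -(u ⬝ᵥ (J *ᵥ u)) := by
    conv_lhs => rw [dotProduct_mulVec, ← mulVec_transpose, hJ, neg_mulVec, neg_dotProduct,
      dotProduct_comm]
  linarith

lemma vecMulVec_mul_mul_vecMulVec_eq_zero {n : Type*} [Fintype n]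
    {J : Matrix n n ℝ} (hJ : Jᵀ = -J) (u : n → ℝ) :
    vecMulVec u u * J * vecMulVec u u = 0 := by
  rw [Matrix.mul_assoc, mul_vecMulVec, vecMulVec_mul_vecMulVec,
    dotProduct_mulVec_self_eq_zero_of_transpose_eq_neg hJ, zero_smul, vecMulVec_zero]

lemma hasDerivAt_const_mul_apply {m n p : Type*} [Fintype n] (A : Matrix m n ℝ)
    {X : ℝ → Matrix n p ℝ} {X' : Matrix n p ℝ} {t : ℝ}
    (hX : ∀ i j, HasDerivAt (fun s => X s i j) (X' i j) t) (i : m) (j : p) :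
    HasDerivAt (fun s => (A * X s) i j) ((A * X') i j) t := by
  simp only [mul_apply]
  exact HasDerivAt.fun_sum fun k _ => (hX k j).const_mul (A i k)

/-- **Corollary 3.** Let `J` be invertible skew-symmetric and `H(t)` symmetric.
If `X̃` solves the rank one perturbed Hamiltonian system
`J·X̃′(t) = (I − uuᵀJ)ᵀ H(t) (I − uuᵀJ)·X̃(t)` with `X̃(0) = I + uuᵀJ`, then
`X(t) := (I − uuᵀJ)·X̃(t)` is differentiable and solves the unperturbed system
`J·X′(t) = H(t)·X(t)` with `X(0) = I`, and `X̃(t) = (I + uuᵀJ)·X(t)` for all `t`.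
Differentiability is expressed entrywise. -/
theorem solution_of_perturbed_system_is_rankOnePerturbation (N : ℕ) (hN : 0 < N)
    (J : Matrix (Fin (2 * N)) (Fin (2 * N)) ℝ)
    (hJinv : IsUnit J) (hJskew : Jᵀ = -J)
    (H : ℝ → Matrix (Fin (2 * N)) (Fin (2 * N)) ℝ)
    (hH : ∀ t, (H t)ᵀ = H t)
    (u : Fin (2 * N) → ℝ)
    (Xp Xp' : ℝ → Matrix (Fin (2 * N)) (Fin (2 * N)) ℝ)
    (hXp : ∀ t i j, HasDerivAt (fun s => Xp s i j) (Xp' t i j) t)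
    (hsys : ∀ t, J * Xp' t =
      (1 - vecMulVec u u * J)ᵀ * H t * (1 - vecMulVec u u * J) * Xp t)
    (hXp0 : Xp 0 = 1 + vecMulVec u u * J) :
    (∀ t : ℝ, ∃ Y : Matrix (Fin (2 * N)) (Fin (2 * N)) ℝ,
        (∀ i j, HasDerivAt (fun s => ((1 - vecMulVec u u * J) * Xp s) i j) (Y i j) t) ∧
        J * Y = H t * ((1 - vecMulVec u u * J) * Xp t)) ∧
      (1 - vecMulVec u u * J) * Xp 0 = 1 ∧
      (∀ t : ℝ, Xp t = (1 + vecMulVec u u * J) * ((1 - vecMulVec u u * J) * Xp t)) := by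
  have hP : (vecMulVec u u)ᵀ = vecMulVec u u := transpose_vecMulVec u u
  have h0 := vecMulVec_mul_mul_vecMulVec_eq_zero hJskew u
  generalize vecMulVec u u = P at *
  have hT : (1 - P * J)ᵀ = 1 + J * P := by
    simp [transpose_mul, hP, hJskew]
  have hleft : (1 - P * J) * (1 + P * J) = 1 := by
    calc (1 - P * J) * (1 + P * J) = 1 - P * J * P * J := by noncomm_ring
      _ = 1 := by simp [h0]
  have hright : (1 + P * J) * (1 - P * J) = 1 := by
    calc (1 + P * J) * (1 - P * J) = 1 - P * J * P * J := by noncomm_ring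
      _ = 1 := by simp [h0]
  have hcancel : (1 - J * P) * (1 + J * P) = 1 := by
    calc (1 - J * P) * (1 + J * P) = 1 - J * (P * J * P) := by noncomm_ring
      _ = 1 := by simp [h0]
  refine ⟨fun t => ⟨(1 - P * J) * Xp' t, hasDerivAt_const_mul_apply _ (hXp t), ?_⟩, ?_,
    fun t => ?_⟩
  · calc J * ((1 - P * J) * Xp' t) = (1 - J * P) * (J * Xp' t) := by noncomm_ring
      _ = (1 - J * P) * (1 + J * P) * (H t * ((1 - P * J) * Xp t)) := by
        rw [hsys, hT]; simp only [Matrix.mul_assoc]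
      _ = H t * ((1 - P * J) * Xp t) := by rw [hcancel, Matrix.one_mul]
  · rw [hXp0, hleft]
  · rw [← Matrix.mul_assoc, hright, Matrix.one_mul]
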